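/- arXiv:2102.00940 — 2 statements merged into one kernel-verified Lean document; each statement's English description precedes it below -/
import Mathlib

section
/- Let p and n_t be positive real numbers and define F : ℝ → ℝ by F(α) = (1 + α²·p/n_t) / ((1 − α)² + α²·(p + 1)/n_t). Set α⁻ = −(n_t + 1)/(2p) − sqrt(((n_t + 1)/(2p))² + n_t/p) and α⁺ = −(n_t + 1)/(2p) + sqrt(((n_t + 1)/(2p))² + n_t/p). Then: (i) α⁻ < 0 < α⁺; (ii) F is differentiable on ℝ and F′(α) = 0 if and only if α = α⁻ or α = α⁺; (iii) F attains its global minimum over ℝ at α⁻ and its global maximum over ℝ at α⁺. In particular the training learning rate minimizing the overparameterized MAML test loss is negative. -/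
/-!
Clearing `n_t`, `F = N / D` with `N(α) = n + p α²` and `D(α) = n (1 - α)² + (p + 1) α² > 0`.
Put `q(α) = p α² + (n + 1) α - n`, whose roots are `α⁻` and `α⁺`.  Expanding the quadratic
polynomial `N(α) D(r) - N(r) D(α)` around `α = r` gives
`n (-2 p r - (n + 1)) (α - r)² - 2 n q(r) (α - r)`.
The linear coefficient gives `F'(r) = -2 n q(r) / D(r)²`, so the critical points are the roots
of `q`.  At a root, only the square term remains, and `-2 p α∓ - (n + 1)` equals
`±2 p √(((n + 1) / (2 p))² + n / p)`, so `α⁻` is the global minimizer and `α⁺` the global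
maximizer.
-/

lemma den_pos {p n : ℝ} (hp : 0 < p) (hn : 0 < n) (a : ℝ) :
    0 < n * (1 - a) ^ 2 + (p + 1) * a ^ 2 := by
  rcases eq_or_ne a 0 with rfl | ha
  · simpa using hn
  · positivity

lemma quot_clear {p n : ℝ} (hn : 0 < n) (a : ℝ) :
    (1 + a ^ 2 * p / n) / ((1 - a) ^ 2 + a ^ 2 * (p + 1) / n)
      = (n + p * a ^ 2) / (n * (1 - a) ^ 2 + (p + 1) * a ^ 2) := by
  rw [← mul_div_mul_left _ _ hn.ne']
  congr 1 <;> field_simp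

lemma hasDerivAt_quot {p n : ℝ} (hp : 0 < p) (hn : 0 < n) (a : ℝ) :
    HasDerivAt (fun a : ℝ => (n + p * a ^ 2) / (n * (1 - a) ^ 2 + (p + 1) * a ^ 2))
      (-2 * n * (p * a ^ 2 + (n + 1) * a - n) / (n * (1 - a) ^ 2 + (p + 1) * a ^ 2) ^ 2) a := by
  have hN : HasDerivAt (fun a : ℝ => n + p * a ^ 2) (p * (2 * a)) a := by
    simpa using ((hasDerivAt_pow 2 a).const_mul p).const_add n
  have hD : HasDerivAt (fun a : ℝ => n * (1 - a) ^ 2 + (p + 1) * a ^ 2)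
      (n * (2 * (1 - a) * (-1)) + (p + 1) * (2 * a)) a := by
    have h1 : HasDerivAt (fun a : ℝ => (1 - a) ^ 2) (2 * (1 - a) * (-1)) a := by
      simpa using ((hasDerivAt_id a).const_sub 1).fun_pow 2
    have h2 : HasDerivAt (fun a : ℝ => a ^ 2) (2 * a) a := by
      simpa using hasDerivAt_pow 2 a
    exact (h1.const_mul n).add (h2.const_mul (p + 1))
  refine (hN.fun_div hD (den_pos hp hn a).ne').congr_deriv ?_
  congr 1
  ring

/-- The expansion of `N(a) D(r) - N(r) D(a)` around a root `r` of `q`. -/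
lemma cross_sub {p n r : ℝ} (hr : p * r ^ 2 + (n + 1) * r - n = 0) (a : ℝ) :
    (n + p * a ^ 2) * (n * (1 - r) ^ 2 + (p + 1) * r ^ 2)
      - (n + p * r ^ 2) * (n * (1 - a) ^ 2 + (p + 1) * a ^ 2)
      = n * (-2 * p * r - (n + 1)) * (a - r) ^ 2 := by
  linear_combination (-2 * n * (a - r)) * hr

/-- For `p, n_t > 0`, the function
`F(α) = (1 + α² p/n_t) / ((1 − α)² + α² (p+1)/n_t)` satisfies: with
`α± = −(n_t+1)/(2p) ± √(((n_t+1)/(2p))² + n_t/p)` we have `α⁻ < 0 < α⁺`, `F` is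
differentiable with `F'(α) = 0 ↔ α = α⁻ ∨ α = α⁺`, `F` attains its global minimum
at `α⁻` and its global maximum at `α⁺`.  In particular, the training learning rate
minimizing the overparameterized MAML test loss is negative. -/
theorem stmt15 (p nt : ℝ) (hp : 0 < p) (hnt : 0 < nt)
    (F : ℝ → ℝ)
    (hF : ∀ α : ℝ, F α = (1 + α ^ 2 * p / nt) / ((1 - α) ^ 2 + α ^ 2 * (p + 1) / nt))
    (αminus αplus : ℝ)
    (hαminus : αminus = -((nt + 1) / (2 * p)) - Real.sqrt (((nt + 1) / (2 * p)) ^ 2 + nt / p))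
    (hαplus : αplus = -((nt + 1) / (2 * p)) + Real.sqrt (((nt + 1) / (2 * p)) ^ 2 + nt / p)) :
    (αminus < 0 ∧ 0 < αplus) ∧
    (∀ α : ℝ, DifferentiableAt ℝ F α) ∧
    (∀ α : ℝ, deriv F α = 0 ↔ α = αminus ∨ α = αplus) ∧
    (∀ α : ℝ, F αminus ≤ F α) ∧
    (∀ α : ℝ, F α ≤ F αplus) := by
  set b := (nt + 1) / (2 * p) with hb
  set s := Real.sqrt (b ^ 2 + nt / p) with hs
  have hb0 : 0 < b := by positivity
  have hs2 : s ^ 2 = b ^ 2 + nt / p := Real.sq_sqrt (by positivity)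
  have hs0 : 0 < s := Real.sqrt_pos.mpr (by positivity)
  have hbs : b < s := by
    have : 0 < nt / p := by positivity
    exact lt_of_pow_lt_pow_left₀ 2 hs0.le (by linarith)
  have hpb : 2 * p * b = nt + 1 := by rw [hb]; field_simp
  have hps : p * s ^ 2 = p * b ^ 2 + nt := by rw [hs2]; field_simp
  have hfactor : ∀ a : ℝ, p * a ^ 2 + (nt + 1) * a - nt = p * ((a - αminus) * (a - αplus)) := by
    intro a
    rw [hαminus, hαplus]
    linear_combination (-a) * hpb + hps
  have hFq : F = fun a : ℝ => (nt + p * a ^ 2) / (nt * (1 - a) ^ 2 + (p + 1) * a ^ 2) := by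
    funext a
    rw [hF, quot_clear hnt]
  have hderiv := fun a : ℝ => hasDerivAt_quot hp hnt a
  rw [← hFq] at hderiv
  refine ⟨⟨by linarith, by linarith⟩, fun a => (hderiv a).differentiableAt, fun a => ?_,
    fun a => ?_, fun a => ?_⟩
  · rw [(hderiv a).deriv, hfactor]
    have := (den_pos hp hnt a).ne'
    simp [this, hp.ne', hnt.ne', sub_eq_zero]
  · have hid := cross_sub (p := p) (n := nt) (r := αminus) (by rw [hfactor]; ring) a
    have hc : -2 * p * αminus - (nt + 1) = 2 * p * s := by
      rw [hαminus]; linear_combination hpb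
    rw [hc] at hid
    have : 0 ≤ nt * (2 * p * s) * (a - αminus) ^ 2 := by positivity
    simp only [hFq]
    rw [div_le_div_iff₀ (den_pos hp hnt _) (den_pos hp hnt _)]
    linarith
  · have hid := cross_sub (p := p) (n := nt) (r := αplus) (by rw [hfactor]; ring) a
    have hc : -2 * p * αplus - (nt + 1) = -(2 * p * s) := by
      rw [hαplus]; linear_combination hpb
    rw [hc] at hid
    have : 0 ≤ nt * (2 * p * s) * (a - αplus) ^ 2 := by positivity
    simp only [hFq]
    rw [div_le_div_iff₀ (den_pos hp hnt _) (den_pos hp hnt _)]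
    linarith
end

section
/- Fix positive integers p, n_t, n_v, n_r, m and reals σ, ν, α_r. Define h^r = (1 − α_r)² + α_r²·(p + 1)/n_r, h^t(α) = (1 − α)² + α²·(p + 1)/n_t, the moment ratios μ₂ = (n_t + p + 1)/n_t, μ₃ = (n_t² + p² + 3n_t p + 3n_t + 3p + 4)/n_t², μ₄ = (n_t³ + p³ + 6n_t²p + 6n_t p² + 6n_t² + 6p² + 17n_t p + 21n_t + 21p + 20)/n_t³, μ₁,₁ = (n_t²p + 2n_t)/(n_t²p), μ₂,₁ = (n_t²p + n_t p² + n_t p + 4n_t + 4p + 4)/(n_t²p), μ₂,₂ = (n_t³p + n_t p³ + 2n_t²p² + 2n_t²p + 2n_t p² + 8n_t² + 8p² + 21n_t p + 20n_t + 20p + 20)/(n_t³p), and the polynomials g₁(α) = 1 − 2αμ₂ + α²μ₃, g₂(α) = 1 − 2αμ₁,₁ + α²μ₂,₁, g₃(α) = 1 − 4α + 6α²μ₂ − 4α³μ₃ + α⁴μ₄, g₄(α) = 1 − 4α + 2α²μ₂ + 4α²μ₁,₁ − 4α³μ₂,₁ + α⁴μ₂,₂. Define L(α) = (σ²/2)(1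 + α_r²p/n_r) + h^r·ν²/2 + (h^r/(2·h^t(α)²))·(p/(n_v·m))·( σ²·(h^t(α) + (α²/n_t)·((n_v + 1)·g₁(α) + p·g₂(α))) + (ν²/p)·((n_v + 1)·g₃(α) + p·g₄(α)) ). Then the derivative of L at α = 0 equals h^r·σ²·p/(n_v·m), which is nonnegative; in particular, if σ > 0 then L′(0) > 0, so the underparameterized test loss is strictly decreasing at α_t = 0 in the direction of negative training learning rates. -/
/-! Near `α = 0` the derivative only sees first-order Taylor coefficients. One has
`h^t(α) = 1 - 2α + O(α²)`, and the bracket in the loss is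
`N(α) = (σ² + K) - (2σ² + 4K)α + O(α²)` with `K = (ν²/p)(n_v + 1 + p)`. Hence
`(N / (h^t)²)'(0) = -(2σ² + 4K) + 4(σ² + K) = 2σ²`: the `ν²` contribution cancels, and the
moment ratios `μ` only enter at second order. Positivity follows from `h^r > 0`. -/

/-- A function with an expansion `a + b x + x² q(x)` has derivative `b` at `0`. -/
lemma hasDerivAt_zero_of_expansion {f q : ℝ → ℝ} {a b : ℝ} (hq : DifferentiableAt ℝ q 0)
    (hf : ∀ x, f x = a + b * x + x ^ 2 * q x) : HasDerivAt f b 0 := by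
  have h := (((hasDerivAt_id (0 : ℝ)).const_mul b).const_add a).add
    (((hasDerivAt_id (0 : ℝ)).pow 2).mul hq.hasDerivAt)
  refine (h.congr_of_eventuallyEq (.of_forall fun x => ?_)).congr_deriv ?_
  · simp [hf x]
  · simp

/-- The derivative at `α_t = 0` of the underparameterized MAML test loss
(Theorem 2 of the paper), as a function of the inner-loop training learning rate,
equals `h^r σ² p / (n_v m) ≥ 0`; in particular it is strictly positive when `σ > 0`,
so the loss is strictly decreasing at `0` in the direction of negative learning
rates. -/
theorem stmt16 (p nt nv nr m : ℕ) (hp : 0 < p) (hnt : 0 < nt) (hnv : 0 < nv)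
    (hnr : 0 < nr) (hm : 0 < m)
    (σ ν αr : ℝ)
    (hr : ℝ) (hhr : hr = (1 - αr) ^ 2 + αr ^ 2 * (p + 1) / nr)
    (ht : ℝ → ℝ) (hht : ∀ α : ℝ, ht α = (1 - α) ^ 2 + α ^ 2 * (p + 1) / nt)
    (μ2 μ3 μ4 μ11 μ21 μ22 : ℝ)
    (hμ2 : μ2 = (nt + p + 1) / nt)
    (hμ3 : μ3 = (nt ^ 2 + p ^ 2 + 3 * nt * p + 3 * nt + 3 * p + 4) / nt ^ 2)
    (hμ4 : μ4 = (nt ^ 3 + p ^ 3 + 6 * nt ^ 2 * p + 6 * nt * p ^ 2 + 6 * nt ^ 2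
      + 6 * p ^ 2 + 17 * nt * p + 21 * nt + 21 * p + 20) / nt ^ 3)
    (hμ11 : μ11 = (nt ^ 2 * p + 2 * nt) / (nt ^ 2 * p))
    (hμ21 : μ21 = (nt ^ 2 * p + nt * p ^ 2 + nt * p + 4 * nt + 4 * p + 4) / (nt ^ 2 * p))
    (hμ22 : μ22 = (nt ^ 3 * p + nt * p ^ 3 + 2 * nt ^ 2 * p ^ 2 + 2 * nt ^ 2 * p
      + 2 * nt * p ^ 2 + 8 * nt ^ 2 + 8 * p ^ 2 + 21 * nt * p + 20 * nt + 20 * p + 20)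
      / (nt ^ 3 * p))
    (g1 g2 g3 g4 : ℝ → ℝ)
    (hg1 : ∀ α : ℝ, g1 α = 1 - 2 * α * μ2 + α ^ 2 * μ3)
    (hg2 : ∀ α : ℝ, g2 α = 1 - 2 * α * μ11 + α ^ 2 * μ21)
    (hg3 : ∀ α : ℝ, g3 α = 1 - 4 * α + 6 * α ^ 2 * μ2 - 4 * α ^ 3 * μ3 + α ^ 4 * μ4)
    (hg4 : ∀ α : ℝ, g4 α = 1 - 4 * α + 2 * α ^ 2 * μ2 + 4 * α ^ 2 * μ11
      - 4 * α ^ 3 * μ21 + α ^ 4 * μ22)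
    (L : ℝ → ℝ)
    (hL : ∀ α : ℝ, L α = σ ^ 2 / 2 * (1 + αr ^ 2 * p / nr) + hr * ν ^ 2 / 2
      + hr / (2 * ht α ^ 2) * (p / (nv * m)) *
        (σ ^ 2 * (ht α + α ^ 2 / nt * ((nv + 1) * g1 α + p * g2 α))
          + ν ^ 2 / p * ((nv + 1) * g3 α + p * g4 α))) :
    deriv L 0 = hr * σ ^ 2 * p / (nv * m) ∧
    0 ≤ deriv L 0 ∧
    (0 < σ → 0 < deriv L 0) := by
  have hp' : (0 : ℝ) < p := by exact_mod_cast hp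
  have hnv' : (0 : ℝ) < nv := by exact_mod_cast hnv
  have hnr' : (0 : ℝ) < nr := by exact_mod_cast hnr
  have hm' : (0 : ℝ) < m := by exact_mod_cast hm
  have hr_pos : 0 < hr := by
    rw [hhr]
    -- The two squares cannot vanish together: the second is positive unless `αr = 0`.
    rcases eq_or_ne αr 0 with h | h
    · simp [h]
    · positivity
  have ht0 : ht 0 = 1 := by simp [hht]
  have hht' : HasDerivAt ht (-2) 0 :=
    hasDerivAt_zero_of_expansion (a := 1) (q := fun _ => 1 + (p + 1) / nt)
      (by fun_prop) (fun x => by rw [hht]; ring)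
  set N : ℝ → ℝ := fun α => σ ^ 2 * (ht α + α ^ 2 / nt * ((nv + 1) * g1 α + p * g2 α))
    + ν ^ 2 / p * ((nv + 1) * g3 α + p * g4 α) with hN
  set K : ℝ := ν ^ 2 / p * (nv + 1 + p) with hK
  have hN0 : N 0 = σ ^ 2 + K := by
    simp [hN, hK, ht0, hg3, hg4]
  have hN' : HasDerivAt N (-(2 * σ ^ 2 + 4 * K)) 0 :=
    hasDerivAt_zero_of_expansion (a := σ ^ 2 + K)
      (q := fun α => σ ^ 2 * (1 + (p + 1) / nt
          + 1 / nt * ((nv + 1) * (1 - 2 * α * μ2 + α ^ 2 * μ3)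
            + p * (1 - 2 * α * μ11 + α ^ 2 * μ21)))
        + ν ^ 2 / p * ((nv + 1) * (6 * μ2 - 4 * α * μ3 + α ^ 2 * μ4)
          + p * (2 * μ2 + 4 * μ11 - 4 * α * μ21 + α ^ 2 * μ22)))
      (by fun_prop)
      (fun x => by simp only [hN, hK, hht, hg1, hg2, hg3, hg4]; ring)
  have hquot := hN'.div (hht'.pow 2) (by simp [ht0])
  have hL' : HasDerivAt L (hr * σ ^ 2 * p / (nv * m)) 0 := by
    have h := (hquot.const_mul (hr / 2 * (p / (nv * m)))).const_add
      (σ ^ 2 / 2 * (1 + αr ^ 2 * p / nr) + hr * ν ^ 2 / 2)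
    refine (h.congr_of_eventuallyEq (.of_forall fun α => ?_)).congr_deriv ?_
    · rw [hL α]
      simp only [hN, Pi.div_apply, Pi.pow_apply]
      ring
    · simp only [Pi.pow_apply, ht0, hN0]
      norm_num
      ring
  rw [hL'.deriv]
  refine ⟨rfl, by positivity, fun hσ => by positivity⟩
end
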